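/- Let K be a field of characteristic zero, n a positive integer, and G a finite subgroup of GL_n(K), where for g ∈ G we write A(g) for its matrix. Let E = Λ(x_1, …, x_n, y_1, …, y_n) be the exterior algebra over K on 2n generators. For each g ∈ G let J'_g be the two-sided ideal of E generated by the n degree-one elements y_i − Σ_{j=1}^n A(g)_{i,j} x_j (for i = 1, …, n), and set I_G = ⋂_{g ∈ G} J'_g. Let G act on the subalgebra Λ(x_1, …, x_n) ⊆ E by the degree-preserving algebra automorphisms determined by g · x_i = Σ_{j=1}^n A(g)_{i,j} x_j, and let J_G ⊆ Λ(x_1, …, x_n) be the Hilbert ideal, i.e., the ideal of Λ(x_1, …, x_n) generated by all G-invariant elements of positive degree. Then (I_G + (y_1, …, y_n)) ∩ Λ(x_1, …, x_n) = J_G, where (y_1, …, y_n) denotes the two-sided ideal of E generated by y_1, …, y_n and Λ(x_1, …, x_n) is the subalgebra of E generated by x_1, …, x_n. -/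

import Mathlib

open scoped DirectSum

/-- The exterior algebra `E = Λ(x_1, …, x_n, y_1, …, y_n)`, realized as the
exterior algebra on `(Fin n → K) × (Fin n → K)`. -/
noncomputable abbrev ExtXY (K : Type*) [Field K] (n : ℕ) :=
  ExteriorAlgebra K ((Fin n → K) × (Fin n → K))

/-- The generator `x_i` of `E`. -/
noncomputable def xVar (K : Type*) [Field K] (n : ℕ) (i : Fin n) : ExtXY K n :=
  ExteriorAlgebra.ι K (Pi.single i 1, 0)

/-- The generator `y_i` of `E`. -/
noncomputable def yVar (K : Type*) [Field K] (n : ℕ) (i : Fin n) : ExtXY K n :=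
  ExteriorAlgebra.ι K (0, Pi.single i 1)

/-- The action of `g ∈ GL_n(K)` on `Λ(x_1, …, x_n)` determined by
`g · x_i = Σ_j A(g)_{i,j} x_j`. -/
noncomputable def xAct (K : Type*) [Field K] (n : ℕ)
    (g : Matrix.GeneralLinearGroup (Fin n) K) :
    ExteriorAlgebra K (Fin n → K) →ₐ[K] ExteriorAlgebra K (Fin n → K) :=
  ExteriorAlgebra.map (Matrix.toLin' ((g : Matrix (Fin n) (Fin n) K).transpose))

/-- The embedding of `Λ(x_1, …, x_n)` as the subalgebra of `E` generated by
`x_1, …, x_n`. -/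
noncomputable def xEmbed (K : Type*) [Field K] (n : ℕ) :
    ExteriorAlgebra K (Fin n → K) →ₐ[K] ExtXY K n :=
  ExteriorAlgebra.map (LinearMap.inl K (Fin n → K) (Fin n → K))

/-!
The ideal `J'_g` is the kernel of the retraction `Λ(x, y) → Λ(x)` which substitutes `g · x` for `y`,
and `(y)` is the kernel of the substitution `y ↦ 0`. If `q` is invariant of positive degree, then
`q(x) = (q(x) - q(y)) + q(y)` lies in `I_G + (y)`, since every substitution `y ↦ g · x` kills the
first summand and `y ↦ 0` kills the second. Conversely, averaging `h = p(x) q(y)` over the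
substitutions gives `∑ g, h(x, g · x) - |G| h(x, 0) = p (∑ g, g · q - |G| q(0))`. The last factor is
invariant without constant term, so the product lies in the Hilbert ideal; as such products span
`Λ(x, y)`, this holds for every `h`. For `h ∈ I_G` the sum vanishes, so `h(x, 0) ∈ J_G`, and on
`Λ(x)` the substitution `y ↦ 0` is the identity.
-/

open ExteriorAlgebra

section PositiveDegree

variable {R M N : Type*} [CommRing R] [AddCommGroup M] [Module R M] [AddCommGroup N] [Module R N]

variable (R M) in
/-- The span of the homogeneous elements of positive degree of the exterior algebra. -/
abbrev positiveDegree : Submodule R (ExteriorAlgebra R M) :=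
  ⨆ d ∈ Set.Ioi (0 : ℕ), ⋀[R]^d M

lemma exteriorPower_zero_sup_positiveDegree : ⋀[R]^0 M ⊔ positiveDegree R M = ⊤ := by
  rw [← (DirectSum.Decomposition.isInternal fun d : ℕ ↦ ⋀[R]^d M).submodule_iSup_eq_top,
    iSup_split_single _ 0]
  simp only [positiveDegree, Set.mem_Ioi, Nat.pos_iff_ne_zero]

lemma map_zero_eq_zero_of_mem_exteriorPower {d : ℕ} (hd : 0 < d) {q : ExteriorAlgebra R M}
    (hq : q ∈ ⋀[R]^d M) : map (0 : M →ₗ[R] N) q = 0 := by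
  obtain ⟨d, rfl⟩ := Nat.exists_eq_add_one_of_ne_zero hd.ne'
  rw [exteriorPower, pow_succ'] at hq
  induction hq using Submodule.mul_induction_on' with
  | mem_mul_mem a ha b _ =>
    obtain ⟨v, rfl⟩ := ha
    simp
  | add a _ b _ ha hb => rw [map_add, ha, hb, add_zero]

lemma mem_positiveDegree_iff {q : ExteriorAlgebra R M} :
    q ∈ positiveDegree R M ↔ map (0 : M →ₗ[R] M) q = 0 := by
  have positiveDegree_le : positiveDegree R M ≤ LinearMap.ker (map (0 : M →ₗ[R] M)).toLinearMap :=
    iSup₂_le fun d hd _ hq ↦ map_zero_eq_zero_of_mem_exteriorPower hd hq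
  refine ⟨fun hq ↦ positiveDegree_le hq, fun hq ↦ ?_⟩
  obtain ⟨c, hc, p, hp, rfl⟩ : ∃ c ∈ ⋀[R]^0 M, ∃ p ∈ positiveDegree R M, c + p = q :=
    Submodule.mem_sup.1 (exteriorPower_zero_sup_positiveDegree.ge Submodule.mem_top)
  obtain ⟨r, rfl⟩ : ∃ r, algebraMap R _ r = c := Submodule.mem_one.1 (by simpa using hc)
  have map_p : map (0 : M →ₗ[R] M) p = 0 := positiveDegree_le hp
  have hr : algebraMap R (ExteriorAlgebra R M) r = 0 := by
    simpa only [map_add, AlgHom.commutes, map_p, add_zero] using hq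
  rwa [hr, zero_add]

end PositiveDegree

section GraphIdeal

variable {R M N : Type*} [CommRing R] [AddCommGroup M] [Module R M] [AddCommGroup N] [Module R N]

lemma map_map_eq_map_comp {P : Type*} [AddCommGroup P] [Module R P] (f : M →ₗ[R] N) (g : N →ₗ[R] P)
    (p : ExteriorAlgebra R M) : map g (map f p) = map (g ∘ₗ f) p :=
  DFunLike.congr_fun (map_comp_map f g) p

lemma ι_inr_mul_map_inl (w : N) (p : ExteriorAlgebra R M) :
    ι R (0, w) * map (.inl R M N) p =
      map (.inl R M N) (CliffordAlgebra.involute p) * ι R (0, w) := by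
  induction p using ExteriorAlgebra.induction with
  | algebraMap r => simp only [AlgHom.commutes, Algebra.commutes]
  | ι v =>
    rw [CliffordAlgebra.involute_ι, map_neg, map_apply_ι, LinearMap.inl_apply, neg_mul]
    exact eq_neg_of_add_eq_zero_left (ι_add_mul_swap _ _)
  | mul a b ha hb => rw [map_mul, map_mul, map_mul, ← mul_assoc, ha, mul_assoc, hb, mul_assoc]
  | add a b ha hb => rw [map_add, map_add, map_add, mul_add, ha, hb, add_mul]

lemma exteriorAlgebra_prod_induction {C : ExteriorAlgebra R (M × N) → Prop}
    (mul : ∀ p q, C (map (.inl R M N) p * map (.inr R M N) q))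
    (add : ∀ a b, C a → C b → C (a + b)) (h : ExteriorAlgebra R (M × N)) : C h := by
  let products : Set (ExteriorAlgebra R (M × N)) :=
    {e | ∃ p q, map (.inl R M N) p * map (.inr R M N) q = e}
  suffices h ∈ AddSubmonoid.closure products by
    induction this using AddSubmonoid.closure_induction with
    | mem e he => obtain ⟨p, q, rfl⟩ := he; exact mul p q
    | zero => simpa using mul 0 0
    | add a b _ _ ha hb => exact add a b ha hb
  induction h using CliffordAlgebra.left_induction with
  | algebraMap r => exact AddSubmonoid.subset_closure ⟨algebraMap R _ r, 1, by simp⟩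
  | add a b ha hb => exact add_mem ha hb
  | ι_mul e v he =>
    induction he using AddSubmonoid.closure_induction with
    | mem e he =>
      obtain ⟨p, q, rfl⟩ := he
      have split_ι : ι R v = map (.inl R M N) (ι R v.1) + ι R (0, v.2) := by simp [← map_add]
      rw [split_ι, add_mul, ← mul_assoc, ← mul_assoc, ι_inr_mul_map_inl]
      refine add_mem (AddSubmonoid.subset_closure ⟨ι R v.1 * p, q, by rw [map_mul]⟩)
        (AddSubmonoid.subset_closure ⟨CliffordAlgebra.involute p, ι R v.2 * q, ?_⟩)
      rw [map_mul, map_apply_ι, LinearMap.inr_apply, mul_assoc]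
    | zero => simp
    | add a b _ _ ha hb => rw [mul_add]; exact add_mem ha hb

/-- The two-sided ideal of `Λ(M × N)` generated by the elements `v - T v` with `v` in `N`. For
`T = g` this is the ideal `J'_g`, and for `T = 0` it is the ideal `(y)`. -/
def graphIdeal (T : N →ₗ[R] M) : TwoSidedIdeal (ExteriorAlgebra R (M × N)) :=
  .span (Set.range fun v ↦ ι R (-T v, v))

lemma span_range_eq_graphIdeal {κ : Type*} {b : κ → N}
    (b_span : Submodule.span R (Set.range b) = ⊤) (T : N →ₗ[R] M) :
    TwoSidedIdeal.span (Set.range fun i ↦ ι R (-T (b i), b i)) = graphIdeal T := by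
  refine le_antisymm (TwoSidedIdeal.span_mono ?_) (TwoSidedIdeal.span_le.2 ?_)
  · rintro _ ⟨i, rfl⟩
    exact ⟨b i, rfl⟩
  rintro _ ⟨v, rfl⟩
  have ι_graph (w : N) : ι R (-T w, w) = (ι R ∘ₗ (-T).prod .id) w := rfl
  simp only [ι_graph]
  induction (b_span ▸ Submodule.mem_top : v ∈ Submodule.span R (Set.range b)) using
    Submodule.span_induction with
  | mem w hw => obtain ⟨i, rfl⟩ := hw; exact TwoSidedIdeal.subset_span ⟨i, rfl⟩
  | zero => rw [map_zero]; exact zero_mem _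
  | add w w' _ _ hw hw' => rw [map_add]; exact add_mem hw hw'
  | smul c w _ hw =>
    rw [map_smul, Algebra.smul_def]
    exact TwoSidedIdeal.mul_mem_left _ _ _ hw

/-- The algebra homomorphism `Λ(M × N) → Λ(M)` which is the identity on `M` and `T` on `N`, i.e.
the substitution `h(x, y) ↦ h(x, T y)`. -/
def graphRetraction (T : N →ₗ[R] M) : ExteriorAlgebra R (M × N) →ₐ[R] ExteriorAlgebra R M :=
  map (LinearMap.id.coprod T)

lemma graphRetraction_map_inl (T : N →ₗ[R] M) (p : ExteriorAlgebra R M) :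
    graphRetraction T (map (.inl R M N) p) = p := by
  rw [graphRetraction, map_map_eq_map_comp, LinearMap.coprod_inl, map_id, AlgHom.id_apply]

lemma graphRetraction_map_inr (T : N →ₗ[R] M) (q : ExteriorAlgebra R N) :
    graphRetraction T (map (.inr R M N) q) = map T q := by
  rw [graphRetraction, map_map_eq_map_comp, LinearMap.coprod_inr]

lemma sub_map_inl_graphRetraction_mem (T : N →ₗ[R] M) (h : ExteriorAlgebra R (M × N)) :
    h - map (.inl R M N) (graphRetraction T h) ∈ graphIdeal T := by
  induction h using ExteriorAlgebra.induction with
  | algebraMap r => simp only [AlgHom.commutes, sub_self, zero_mem]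
  | ι v =>
    refine TwoSidedIdeal.subset_span ⟨v.2, ?_⟩
    rw [graphRetraction, map_apply_ι, map_apply_ι, ← map_sub]
    exact congrArg (ι R) (by ext <;> simp)
  | mul a b ha hb =>
    have sub_eq : a * b - map (.inl R M N) (graphRetraction T (a * b)) =
        (a - map (.inl R M N) (graphRetraction T a)) * b +
          map (.inl R M N) (graphRetraction T a) *
            (b - map (.inl R M N) (graphRetraction T b)) := by
      simp only [map_mul]
      noncomm_ring
    rw [sub_eq]
    exact add_mem (TwoSidedIdeal.mul_mem_right _ _ _ ha) (TwoSidedIdeal.mul_mem_left _ _ _ hb)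
  | add a b ha hb =>
    rw [map_add, map_add, add_sub_add_comm]
    exact add_mem ha hb

lemma graphIdeal_eq_ker (T : N →ₗ[R] M) :
    graphIdeal T = TwoSidedIdeal.ker (graphRetraction T) := by
  refine le_antisymm (TwoSidedIdeal.span_le.2 ?_) fun h hh ↦ ?_
  · rintro _ ⟨v, rfl⟩
    simp [TwoSidedIdeal.mem_ker, graphRetraction]
  · rw [TwoSidedIdeal.mem_ker] at hh
    simpa only [hh, map_zero, sub_zero] using sub_map_inl_graphRetraction_mem T h

lemma mem_graphIdeal_iff {T : N →ₗ[R] M} {h : ExteriorAlgebra R (M × N)} :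
    h ∈ graphIdeal T ↔ graphRetraction T h = 0 := by
  rw [graphIdeal_eq_ker, TwoSidedIdeal.mem_ker]

end GraphIdeal

section HilbertIdeal

variable {R M G : Type*} [CommRing R] [AddCommGroup M] [Module R M]

/-- The ideal of `Λ(M)` generated by the invariants of positive degree of the action of `G` by the
algebra automorphisms extending the linear representation `ρ` on `M`. -/
def hilbertIdeal [Monoid G] (ρ : Representation R G M) : TwoSidedIdeal (ExteriorAlgebra R M) :=
  .span {q | (∀ g, map (ρ g) q = q) ∧ q ∈ positiveDegree R M}

lemma map_inl_mem_of_invariant [Monoid G] {ρ : Representation R G M} {q : ExteriorAlgebra R M}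
    (invariant : ∀ g, map (ρ g) q = q) (positive : q ∈ positiveDegree R M) :
    map (.inl R M M) q ∈ (⨅ g, graphIdeal (ρ g)) ⊔ graphIdeal (0 : M →ₗ[R] M) := by
  rw [← sub_add_cancel (map (.inl R M M) q) (map (.inr R M M) q)]
  refine add_mem (TwoSidedIdeal.mem_sup_left ?_) (TwoSidedIdeal.mem_sup_right ?_)
  · refine (TwoSidedIdeal.mem_iInf _).2 fun g ↦ mem_graphIdeal_iff.2 ?_
    rw [map_sub, graphRetraction_map_inl, graphRetraction_map_inr, invariant, sub_self]
  · rw [mem_graphIdeal_iff, graphRetraction_map_inr, mem_positiveDegree_iff.1 positive]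

variable [Group G] [Fintype G]

lemma sum_map_sub_card_smul_mem_hilbertIdeal (ρ : Representation R G M)
    (q : ExteriorAlgebra R M) :
    ∑ g, map (ρ g) q - (Fintype.card G : R) • map (0 : M →ₗ[R] M) q ∈ hilbertIdeal ρ := by
  refine TwoSidedIdeal.subset_span ⟨fun g ↦ ?_, mem_positiveDegree_iff.2 ?_⟩
  · have sum_invariant : ∑ k, map (ρ (g * k)) q = ∑ k, map (ρ k) q :=
      Equiv.sum_comp (Equiv.mulLeft g) fun k ↦ map (ρ k) q
    simp only [map_sub, map_sum, map_smul, map_map_eq_map_comp,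
      ← Module.End.mul_eq_comp, ← map_mul, sum_invariant, mul_zero]
  · simp only [map_sub, map_sum, map_nsmul, map_map_eq_map_comp, LinearMap.zero_comp,
      Finset.sum_const, Finset.card_univ, Nat.cast_smul_eq_nsmul, sub_self]

lemma sum_graphRetraction_sub_card_smul_mem_hilbertIdeal (ρ : Representation R G M)
    (h : ExteriorAlgebra R (M × M)) :
    ∑ g, graphRetraction (ρ g) h - (Fintype.card G : R) • graphRetraction (0 : M →ₗ[R] M) h ∈
      hilbertIdeal ρ := by
  induction h using exteriorAlgebra_prod_induction with
  | mul p q =>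
    simp only [map_mul, graphRetraction_map_inl, graphRetraction_map_inr]
    rw [← Finset.mul_sum, ← mul_smul_comm, ← mul_sub]
    exact TwoSidedIdeal.mul_mem_left _ _ _ (sum_map_sub_card_smul_mem_hilbertIdeal ρ q)
  | add a b ha hb =>
    simp only [map_add, Finset.sum_add_distrib, smul_add, add_sub_add_comm]
    exact add_mem ha hb

lemma graphRetraction_zero_mem_hilbertIdeal {ρ : Representation R G M}
    (card_unit : IsUnit (Fintype.card G : R)) {h : ExteriorAlgebra R (M × M)}
    (hh : h ∈ ⨅ g, graphIdeal (ρ g)) :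
    graphRetraction (0 : M →ₗ[R] M) h ∈ hilbertIdeal ρ := by
  have sum_eq_zero : ∑ g, graphRetraction (ρ g) h = 0 :=
    Finset.sum_eq_zero fun g _ ↦ mem_graphIdeal_iff.1 ((TwoSidedIdeal.mem_iInf _).1 hh g)
  have card_smul_mem :
      (Fintype.card G : R) • graphRetraction (0 : M →ₗ[R] M) h ∈ hilbertIdeal ρ := by
    simpa only [sum_eq_zero, zero_sub, neg_neg] using
      neg_mem (sum_graphRetraction_sub_card_smul_mem_hilbertIdeal ρ h)
  obtain ⟨c, hc⟩ := card_unit.exists_left_inv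
  rw [← one_smul R (graphRetraction 0 h), ← hc, mul_smul, Algebra.smul_def]
  exact TwoSidedIdeal.mul_mem_left _ _ _ card_smul_mem

end HilbertIdeal

theorem derksen_exterior_hilbert_ideal_general {R M G : Type*} [CommRing R] [AddCommGroup M]
    [Module R M] [Group G] [Finite G] (ρ : Representation R G M)
    (card_unit : IsUnit (Nat.card G : R)) :
    ((⨅ g, graphIdeal (ρ g)) ⊔ graphIdeal (0 : M →ₗ[R] M)).comap (map (.inl R M M)) =
      hilbertIdeal ρ := by
  cases nonempty_fintype G
  rw [Nat.card_eq_fintype_card] at card_unit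
  refine le_antisymm (fun p hp ↦ ?_) (TwoSidedIdeal.span_le.2 fun q hq ↦ ?_)
  · obtain ⟨a, ha, b, hb, hab⟩ := TwoSidedIdeal.mem_sup.1 ((TwoSidedIdeal.mem_comap _).1 hp)
    have hp_eq : graphRetraction (0 : M →ₗ[R] M) a = p := by
      rw [← graphRetraction_map_inl (0 : M →ₗ[R] M) p, ← hab, map_add, mem_graphIdeal_iff.1 hb,
        add_zero]
    exact hp_eq ▸ graphRetraction_zero_mem_hilbertIdeal card_unit ha
  · exact (TwoSidedIdeal.mem_comap _).2 (map_inl_mem_of_invariant hq.1 hq.2)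

section Coordinates

variable {K : Type*} [Field K] {n : ℕ}

/-- The representation of a matrix group on the span of `x_1, …, x_n` in which `g⁻¹` acts by
`x_i ↦ Σ_j A(g)_{i,j} x_j`. The inverse turns this substitution, which reverses products, into a
left action. -/
def substitutionRep (G : Subgroup (Matrix.GeneralLinearGroup (Fin n) K)) :
    Representation K G (Fin n → K) where
  toFun g := Matrix.toLin' (g⁻¹.1.1 : Matrix (Fin n) (Fin n) K).transpose
  map_one' := by simp [Module.End.one_eq_id]
  map_mul' g h := by simp [Module.End.mul_eq_comp, Matrix.transpose_mul, Matrix.toLin'_mul]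

lemma substitutionRep_inv (G : Subgroup (Matrix.GeneralLinearGroup (Fin n) K)) (g : G) :
    substitutionRep G g⁻¹ = Matrix.toLin' (g.1.1 : Matrix (Fin n) (Fin n) K).transpose := by
  change Matrix.toLin' (g⁻¹⁻¹.1.1 : Matrix (Fin n) (Fin n) K).transpose = _
  rw [inv_inv]

lemma sum_smul_xVar (w : Fin n → K) : ∑ j, w j • xVar K n j = ι K (w, 0) := by
  have xVar_eq (j : Fin n) : xVar K n j = (ι K ∘ₗ .inl K _ _) (Pi.single j 1) := rfl
  simp only [xVar_eq, ← map_smul, ← map_sum]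
  rw [← pi_eq_sum_univ' w]
  rfl

lemma span_yVar_sub_eq_graphIdeal (A : Matrix (Fin n) (Fin n) K) :
    TwoSidedIdeal.span {e | ∃ i, e = yVar K n i - ∑ j, A i j • xVar K n j} =
      graphIdeal (Matrix.toLin' A.transpose) := by
  rw [← span_range_eq_graphIdeal (Pi.basisFun K (Fin n)).span_eq]
  congr 1
  ext e
  refine exists_congr fun i ↦ ?_
  rw [sum_smul_xVar, yVar, ← map_sub, eq_comm]
  simp [Matrix.col]

lemma span_range_yVar_eq_graphIdeal :
    TwoSidedIdeal.span (Set.range (yVar K n)) =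
      graphIdeal (0 : (Fin n → K) →ₗ[K] Fin n → K) := by
  rw [← span_range_eq_graphIdeal (Pi.basisFun K (Fin n)).span_eq]
  congr 2
  ext i
  simp [yVar]

lemma iInf_span_yVar_sub_eq_iInf_graphIdeal
    (G : Subgroup (Matrix.GeneralLinearGroup (Fin n) K)) :
    ⨅ g : G, TwoSidedIdeal.span {e : ExtXY K n | ∃ i : Fin n, e = yVar K n i - ∑ j : Fin n,
        (((g : Matrix.GeneralLinearGroup (Fin n) K) : Matrix (Fin n) (Fin n) K) i j) •
          xVar K n j} =
      ⨅ g, graphIdeal (substitutionRep G g) := by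
  refine (Equiv.inv G).iInf_congr fun g ↦ ?_
  rw [span_yVar_sub_eq_graphIdeal, Equiv.inv_apply, substitutionRep_inv]

lemma span_xAct_invariants_eq_hilbertIdeal
    (G : Subgroup (Matrix.GeneralLinearGroup (Fin n) K)) :
    TwoSidedIdeal.span {q | (∀ g : G, xAct K n g q = q) ∧ q ∈ positiveDegree K (Fin n → K)} =
      hilbertIdeal (substitutionRep G) := by
  refine congrArg TwoSidedIdeal.span (Set.ext fun q ↦ and_congr_left' ?_)
  refine Iff.trans ?_ inv_surjective.forall.symm
  simp only [substitutionRep_inv, xAct]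

end Coordinates

/-- **Derksen's theorem in the exterior algebra.**
For a finite subgroup `G ≤ GL_n(K)`, with `J'_g ⊆ E = Λ(𝐱,𝐲)` the two-sided
ideal generated by the elements `y_i − Σ_j A(g)_{i,j} x_j`, with
`I_G = ⋂_g J'_g`, and `(𝐲)` the ideal generated by `y_1, …, y_n`, the
intersection `(I_G + (𝐲)) ∩ Λ(𝐱)` equals the Hilbert ideal `J_G ⊆ Λ(𝐱)`,
the ideal generated by all `G`-invariant elements of positive degree. -/
theorem derksen_exterior_hilbert_ideal
    (K : Type*) [Field K] [CharZero K] (n : ℕ) (hn : 0 < n)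
    (G : Subgroup (Matrix.GeneralLinearGroup (Fin n) K)) [Finite G] :
    {e : ExtXY K n |
        e ∈ (⨅ g : G, TwoSidedIdeal.span
              {e' : ExtXY K n | ∃ i : Fin n,
                e' = yVar K n i - ∑ j : Fin n,
                  (((g : Matrix.GeneralLinearGroup (Fin n) K) :
                      Matrix (Fin n) (Fin n) K) i j) • xVar K n j}) ⊔
            TwoSidedIdeal.span (Set.range (yVar K n)) ∧
        e ∈ Set.range (xEmbed K n)}
      = (xEmbed K n) ''
          {p : ExteriorAlgebra K (Fin n → K) |
            p ∈ TwoSidedIdeal.span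
              {q : ExteriorAlgebra K (Fin n → K) |
                (∀ g : G, xAct K n g q = q) ∧
                q ∈ (⨆ d ∈ Set.Ioi (0 : ℕ), ⋀[K]^d (Fin n → K) :
                      Submodule K (ExteriorAlgebra K (Fin n → K)))}} := by
  have card_unit : IsUnit (Nat.card G : K) := (Nat.cast_ne_zero.2 Nat.card_pos.ne').isUnit
  rw [iInf_span_yVar_sub_eq_iInf_graphIdeal, span_range_yVar_eq_graphIdeal,
    span_xAct_invariants_eq_hilbertIdeal, ← derksen_exterior_hilbert_ideal_general _ card_unit]
  simp only [TwoSidedIdeal.mem_comap]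
  exact Set.image_preimage_eq_inter_range.symm
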